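/- arXiv:2109.12516 — 3 statements merged into one kernel-verified Lean document; each statement's English description precedes it below -/
import Mathlib

section
/- Let S be a type, let γ be a real number with 0 < γ < 1, and let Φ : S → ℝ be a bounded function. Then for every sequence of states s : ℕ → S, the series ∑_{t=0}^{∞} γ^t · (γ·Φ(s(t+1)) − Φ(s(t))) converges, and its sum equals −Φ(s(0)). -/
/-- Telescoping identity underlying potential-based reward shaping:
for a bounded potential `Φ` and discount factor `0 < γ < 1`, along any state
sequence `s : ℕ → S` the series `∑ₜ γ^t * (γ * Φ (s (t+1)) - Φ (s t))`
converges with sum `-Φ (s 0)`. -/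
theorem shaping_telescope_hasSum {S : Type*} (γ : ℝ) (hγ0 : 0 < γ) (hγ1 : γ < 1)
    (Φ : S → ℝ) (hΦ : ∃ C : ℝ, ∀ x : S, |Φ x| ≤ C) :
    ∀ s : ℕ → S,
      HasSum (fun t : ℕ => γ ^ t * (γ * Φ (s (t + 1)) - Φ (s t))) (-Φ (s 0)) := by
  obtain ⟨C, hC⟩ := hΦ
  intro s
  -- The terms are `g (t + 1) - g t` with `g t = γ ^ t * Φ (s t)`. As `Φ` is bounded, `g` is
  -- summable, so the series is the difference of the shifted sum and the sum of `g`, i.e. `-g 0`.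
  have hg : Summable fun t : ℕ => γ ^ t * Φ (s t) := by
    refine Summable.of_norm_bounded
      ((summable_geometric_of_lt_one hγ0.le hγ1).mul_right C) fun t => ?_
    rw [Real.norm_eq_abs, abs_mul, abs_of_pos (pow_pos hγ0 t)]
    exact mul_le_mul_of_nonneg_left (hC _) (pow_pos hγ0 t).le
  have hshift := (hasSum_nat_add_iff' 1).mpr hg.hasSum
  convert hshift.sub hg.hasSum using 1
  · rfl
  · funext t
    ring
  · simp
end

section
/- Let S be a type, let γ be a real number with 0 < γ < 1, let Φ : S → ℝ be a bounded function, and let r : ℕ → ℝ be a bounded sequence of rewards. Then for every sequence of states s : ℕ → S, the shaped discounted return ∑_{t=0}^{∞} γ^t · (r(t) + γ·Φ(s(t+1)) − Φ(s(t))) converges, and it equals the original discounted return ∑_{t=0}^{∞} γ^t · r(t) minus Φ(s(0)). -/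
theorem summable_geometric_mul_of_bounded {γ : ℝ} (hγ0 : 0 < γ) (hγ1 : γ < 1)
    {b : ℕ → ℝ} (hb : ∃ C : ℝ, ∀ t : ℕ, |b t| ≤ C) :
    Summable (fun t : ℕ => γ ^ t * b t) := by
  obtain ⟨C, hC⟩ := hb
  refine Summable.of_norm_bounded
    ((summable_geometric_of_lt_one hγ0.le hγ1).mul_right C) fun t => ?_
  rw [Real.norm_eq_abs, abs_mul, abs_of_pos (pow_pos hγ0 t)]
  exact mul_le_mul_of_nonneg_left (hC t) (pow_pos hγ0 t).le


/-- Potential-based reward shaping changes the discounted return of any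
trajectory by exactly `-Φ (s 0)`: for bounded `Φ` and bounded rewards `r`,
the shaped discounted return `∑ₜ γ^t * (r t + γ * Φ (s (t+1)) - Φ (s t))`
converges and equals `(∑' t, γ^t * r t) - Φ (s 0)`. -/
theorem shaped_return_hasSum {S : Type*} (γ : ℝ) (hγ0 : 0 < γ) (hγ1 : γ < 1)
    (Φ : S → ℝ) (hΦ : ∃ C : ℝ, ∀ x : S, |Φ x| ≤ C)
    (r : ℕ → ℝ) (hr : ∃ C : ℝ, ∀ t : ℕ, |r t| ≤ C) :
    ∀ s : ℕ → S,
      HasSum (fun t : ℕ => γ ^ t * (r t + γ * Φ (s (t + 1)) - Φ (s t)))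
        ((∑' t : ℕ, γ ^ t * r t) - Φ (s 0)) := by
  intro s
  have hR := summable_geometric_mul_of_bounded hγ0 hγ1 hr
  have hP : Summable (fun t : ℕ => γ ^ t * Φ (s t)) :=
    summable_geometric_mul_of_bounded hγ0 hγ1 (hΦ.imp fun _ hC t => hC (s t))
  -- The shaping terms telescope: they are the potential series shifted by one, minus itself.
  have hT := ((hasSum_nat_add_iff' 1).2 hP.hasSum).sub hP.hasSum
  convert hR.hasSum.add hT using 1
  · funext t
    ring
  · simp only [Finset.sum_range_one, pow_zero, one_mul]
    ring
end

section
/- Let S be a type, let γ be a real number with 0 < γ < 1, and let Φ : S → ℝ be a bounded function. Let (s, r) and (s', r') be two trajectories, i.e., state sequences s, s' : ℕ → S with the same initial state s(0) = s'(0), together with bounded reward sequences r, r' : ℕ → ℝ. Then the shaped discounted return of (s, r) is greater than or equal to the shaped discounted return of (s', r') if and only if the original discounted return of (s, r) is greater than or equal to the original discounted return of (s', r'). In particular, a trajectory maximizes the shaped discounted return over any family of trajectories sharing the same initial state if and only if it maximizes the original discounted return over that family. -/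
/-!
The shaping terms telescope: `γ ^ t * (γ * Φ (s (t + 1)) - Φ (s t)) = a (t + 1) - a t` with
`a t = γ ^ t * Φ (s t)`. Since `Φ` is bounded and `0 < γ < 1`, the series of the `a t` converges
absolutely, so the shaping terms sum to `-a 0 = -Φ (s 0)`. The shaped return is therefore the
original return shifted by a constant depending only on the initial state
(`tsum_shaped_eq`), and such a shift preserves the order.
-/

theorem summable_discounted {γ : ℝ} (hγ0 : 0 < γ) (hγ1 : γ < 1) {u : ℕ → ℝ}
    (hu : ∃ C : ℝ, ∀ t, |u t| ≤ C) : Summable fun t => γ ^ t * u t := by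
  obtain ⟨C, hC⟩ := hu
  refine Summable.of_norm_bounded
    ((summable_geometric_of_lt_one hγ0.le hγ1).mul_right C) fun t => ?_
  rw [Real.norm_eq_abs, abs_mul, abs_of_pos (pow_pos hγ0 t)]
  exact mul_le_mul_of_nonneg_left (hC t) (pow_pos hγ0 t).le

theorem tsum_shaped_eq {S : Type*} {γ : ℝ} (hγ0 : 0 < γ) (hγ1 : γ < 1)
    {Φ : S → ℝ} (hΦ : ∃ C : ℝ, ∀ x : S, |Φ x| ≤ C) (s : ℕ → S)
    {r : ℕ → ℝ} (hr : ∃ C : ℝ, ∀ t : ℕ, |r t| ≤ C) :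
    ∑' t : ℕ, γ ^ t * (r t + γ * Φ (s (t + 1)) - Φ (s t)) =
      (∑' t : ℕ, γ ^ t * r t) - Φ (s 0) := by
  have hR := summable_discounted hγ0 hγ1 hr
  have ha : Summable fun t => γ ^ t * Φ (s t) :=
    summable_discounted hγ0 hγ1 (hΦ.imp fun _ hC t => hC (s t))
  have ha' : Summable fun t => γ ^ (t + 1) * Φ (s (t + 1)) := (summable_nat_add_iff 1).2 ha
  have hsplit := ha.tsum_eq_zero_add
  calc ∑' t : ℕ, γ ^ t * (r t + γ * Φ (s (t + 1)) - Φ (s t))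
      = ∑' t : ℕ, (γ ^ t * r t + γ ^ (t + 1) * Φ (s (t + 1)) - γ ^ t * Φ (s t)) :=
        tsum_congr fun t => by ring
    _ = (∑' t : ℕ, γ ^ t * r t) + (∑' t : ℕ, γ ^ (t + 1) * Φ (s (t + 1))) -
          ∑' t : ℕ, γ ^ t * Φ (s t) := by
        rw [(hR.add ha').tsum_sub ha, hR.tsum_add ha']
    _ = (∑' t : ℕ, γ ^ t * r t) - Φ (s 0) := by
        rw [hsplit, pow_zero, one_mul]
        ring

/-- Policy-optimality invariance of potential-based reward shaping, at the
trajectory level: for two trajectories `(s, r)` and `(s', r')` with the same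
initial state, the shaped discounted returns compare in the same way as the
original discounted returns. -/
theorem shaped_return_order_iff {S : Type*} (γ : ℝ) (hγ0 : 0 < γ) (hγ1 : γ < 1)
    (Φ : S → ℝ) (hΦ : ∃ C : ℝ, ∀ x : S, |Φ x| ≤ C)
    (s s' : ℕ → S) (h0 : s 0 = s' 0)
    (r r' : ℕ → ℝ) (hr : ∃ C : ℝ, ∀ t : ℕ, |r t| ≤ C)
    (hr' : ∃ C : ℝ, ∀ t : ℕ, |r' t| ≤ C) :
    (∑' t : ℕ, γ ^ t * (r t + γ * Φ (s (t + 1)) - Φ (s t))) ≥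
        (∑' t : ℕ, γ ^ t * (r' t + γ * Φ (s' (t + 1)) - Φ (s' t))) ↔
      (∑' t : ℕ, γ ^ t * r t) ≥ (∑' t : ℕ, γ ^ t * r' t) := by
  rw [tsum_shaped_eq hγ0 hγ1 hΦ s hr, tsum_shaped_eq hγ0 hγ1 hΦ s' hr', h0]
  exact sub_le_sub_iff_right _
end
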